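/- arXiv:2409.00913 — 10 statements merged into one kernel-verified Lean document; each statement's English description precedes it below -/
import Mathlib

section
/- Let f : ℝⁿ → ℝ be a differentiable convex function with f(0) = 0 and f(x) ≥ 0 for all x, and let g : ℝⁿ → ℝ be a differentiable convex function. Let α, β : [0,∞) → ℝ be differentiable functions satisfying exp(α(t)) ≥ β'(t) > 0 for all t ≥ 0, and let a : [0,∞) → [0,1] be any function. Suppose X : [0,∞) → ℝⁿ is twice differentiable, and define Z(t) = X(t) + exp(−α(t))·X'(t) and Y(t) = X(t) + a(t)·(Z(t) − X(t)). Assume the curve t ↦ ∇g(Z(t)) is differentiable with derivative (d/dt)∇g(Z(t)) = −exp(α(t)+β(t))·∇f(Y(t)) for every t ≥ 0. Then the energy E(t) = D_g(0, Z(t)) + exp(β(t))·f(X(t)) is monotonically non-increasing on [0,∞), and f(X(t)) ≤ exp(−β(t))·E(0) for all t ≥ 0. -/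
open Set RealInnerProductSpace

/-- Bregman divergence `D_g(y, x) = g(y) − g(x) − ⟨∇g(x), y − x⟩`, where `g'`
is the gradient map of `g`. -/
noncomputable def breg {n : ℕ} (g : EuclideanSpace ℝ (Fin n) → ℝ)
    (g' : EuclideanSpace ℝ (Fin n) → EuclideanSpace ℝ (Fin n))
    (y x : EuclideanSpace ℝ (Fin n)) : ℝ :=
  g y - g x - ⟪g' x, y - x⟫

theorem tangent_le {n : ℕ} (f : EuclideanSpace ℝ (Fin n) → ℝ)
    (f' : EuclideanSpace ℝ (Fin n) → EuclideanSpace ℝ (Fin n))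
    (hf' : ∀ x, HasGradientAt f (f' x) x) (hfconv : ConvexOn ℝ univ f)
    (x y : EuclideanSpace ℝ (Fin n)) : f x + ⟪f' x, y - x⟫ ≤ f y := by
  have hc : ConvexOn ℝ univ (fun s : ℝ => f (AffineMap.lineMap x y s)) := by
    have := hfconv.comp_affineMap (AffineMap.lineMap (k := ℝ) x y)
    simpa [Function.comp_def] using this
  have hd : HasDerivAt (fun s : ℝ => f (AffineMap.lineMap x y s)) ⟪f' x, y - x⟫ 0 := by
    have h1 : HasDerivAt (fun s : ℝ => AffineMap.lineMap x y s) (y - x) (0 : ℝ) :=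
      AffineMap.hasDerivAt_lineMap
    have h2 := hf' (AffineMap.lineMap x y (0 : ℝ))
    have h3 := h2.hasFDerivAt.comp_hasDerivAt (0 : ℝ) h1
    simp only [AffineMap.lineMap_apply_zero, InnerProductSpace.toDual_apply_apply] at h3
    exact h3
  have h := hc.le_slope_of_hasDerivAt (mem_univ (0 : ℝ)) (mem_univ (1 : ℝ)) one_pos hd
  simp [slope_def_field] at h
  linarith

theorem key_ineq {n : ℕ} (f : EuclideanSpace ℝ (Fin n) → ℝ)
    (f' : EuclideanSpace ℝ (Fin n) → EuclideanSpace ℝ (Fin n))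
    (hf' : ∀ x, HasGradientAt f (f' x) x) (hfconv : ConvexOn ℝ univ f) (hf0 : f 0 = 0)
    (x z : EuclideanSpace ℝ (Fin n)) (a : ℝ) (ha : a ∈ Icc (0 : ℝ) 1) :
    f x + ⟪f' x, z - x⟫ ≤ ⟪f' (x + a • (z - x)), z⟫ := by
  obtain ⟨y, hy⟩ : ∃ y, y = x + a • (z - x) := ⟨_, rfl⟩
  rw [← hy]
  have h1 := tangent_le f f' hf' hfconv x y
  have h2 := tangent_le f f' hf' hfconv y x
  have h3 := tangent_le f f' hf' hfconv y 0
  have e1 : ⟪f' x, y - x⟫ = a * ⟪f' x, z - x⟫ := by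
    rw [hy, add_sub_cancel_left, inner_smul_right]
  have e2 : ⟪f' y, x - y⟫ = - (a * ⟪f' y, z - x⟫) := by
    have : x - y = -(a • (z - x)) := by rw [hy]; abel
    rw [this, inner_neg_right, inner_smul_right]
  have e3 : ⟪f' y, z⟫ = - ⟪f' y, 0 - y⟫ + (1 - a) * ⟪f' y, z - x⟫ := by
    have : z = -(0 - y) + (1 - a) • (z - x) := by rw [hy]; module
    conv_lhs => rw [this]
    rw [inner_add_right, inner_neg_right, inner_smul_right]
  have hm : ⟪f' x, z - x⟫ ≤ ⟪f' y, z - x⟫ := by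
    rcases ha.1.eq_or_lt with h | h
    · have : y = x := by rw [hy, ← h]; simp
      rw [this]
    · refine le_of_mul_le_mul_left ?_ h
      linarith
  have := mul_le_mul_of_nonneg_left hm (sub_nonneg.2 ha.2)
  linarith

/-- Lyapunov convergence of the generalized model (G-ODE-C) in the convex case. -/
theorem godec_energy_decay {n : ℕ}
    (f g : EuclideanSpace ℝ (Fin n) → ℝ)
    (f' g' : EuclideanSpace ℝ (Fin n) → EuclideanSpace ℝ (Fin n))
    (hf' : ∀ x, HasGradientAt f (f' x) x)
    (hg' : ∀ x, HasGradientAt g (g' x) x)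
    (hfconv : ConvexOn ℝ univ f)
    (hgconv : ConvexOn ℝ univ g)
    (hf0 : f 0 = 0)
    (hfnn : ∀ x, 0 ≤ f x)
    (α β α' β' : ℝ → ℝ)
    (hα : ∀ t, 0 ≤ t → HasDerivAt α (α' t) t)
    (hβ : ∀ t, 0 ≤ t → HasDerivAt β (β' t) t)
    (hscale : ∀ t, 0 ≤ t → 0 < β' t ∧ β' t ≤ Real.exp (α t))
    (a : ℝ → ℝ)
    (ha : ∀ t, 0 ≤ t → a t ∈ Icc (0 : ℝ) 1)
    (X X' X'' Z Y : ℝ → EuclideanSpace ℝ (Fin n))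
    (hX : ∀ t, 0 ≤ t → HasDerivAt X (X' t) t)
    (hX' : ∀ t, 0 ≤ t → HasDerivAt X' (X'' t) t)
    (hZ : ∀ t, Z t = X t + Real.exp (-α t) • X' t)
    (hY : ∀ t, Y t = X t + a t • (Z t - X t))
    (hODE : ∀ t, 0 ≤ t →
      HasDerivAt (fun u => g' (Z u)) (-(Real.exp (α t + β t)) • f' (Y t)) t)
    (E : ℝ → ℝ)
    (hE : ∀ t, E t = breg g g' 0 (Z t) + Real.exp (β t) * f (X t)) :
    AntitoneOn E (Ici 0) ∧ ∀ t, 0 ≤ t → f (X t) ≤ Real.exp (-β t) * E 0 := by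
  have hder : ∀ t, 0 ≤ t → HasDerivAt E
      (-Real.exp (α t + β t) * ⟪f' (Y t), Z t⟫ +
        (Real.exp (β t) * β' t * f (X t) + Real.exp (β t) * ⟪f' (X t), X' t⟫)) t := by
    intro t ht
    obtain ⟨Z', hZ'⟩ : ∃ Z', HasDerivAt Z Z' t := by
      rw [funext hZ]
      exact ⟨_, (hX t ht).add ((hα t ht).neg.exp.smul (hX' t ht))⟩
    have hgz := (hg' (Z t)).hasFDerivAt.comp_hasDerivAt t hZ'
    have hfx := (hf' (X t)).hasFDerivAt.comp_hasDerivAt t (hX t ht)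
    have hin := (hODE t ht).inner ℝ (hZ'.const_sub 0)
    have h := ((hgz.const_sub (g 0)).sub hin).add ((hβ t ht).exp.mul hfx)
    rw [funext hE]
    unfold breg
    refine HasDerivAt.congr_deriv (f := fun x => g 0 - g (Z x) - ⟪g' (Z x), 0 - Z x⟫ +
      Real.exp (β x) * f (X x)) h ?_
    simp [inner_smul_left]
  have hanti : AntitoneOn E (Ici 0) := by
    refine antitoneOn_of_hasDerivWithinAt_nonpos (convex_Ici 0)
      (fun t ht => (hder t ht).continuousAt.continuousWithinAt)
      (fun t ht => (hder t (interior_subset ht)).hasDerivWithinAt) ?_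
    intro t ht
    have ht : 0 ≤ t := interior_subset ht
    have hk := key_ineq f f' hf' hfconv hf0 (X t) (Z t) (a t) (ha t ht)
    rw [← hY] at hk
    have hx : X' t = Real.exp (α t) • (Z t - X t) := by
      rw [hZ, add_sub_cancel_left, smul_smul, ← Real.exp_add]; simp
    rw [hx, inner_smul_right, Real.exp_add]
    have hb := Real.exp_pos (β t)
    have hA := Real.exp_pos (α t)
    have h1 := mul_le_mul_of_nonneg_left hk (mul_pos hb hA).le
    have h2 := mul_le_mul_of_nonneg_left
      (mul_le_mul_of_nonneg_right (hscale t ht).2 (hfnn (X t))) hb.le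
    nlinarith
  refine ⟨hanti, fun t ht => ?_⟩
  have h := hanti (mem_Ici.2 le_rfl) (mem_Ici.2 ht) ht
  have hb : 0 ≤ breg g g' 0 (Z t) := by
    have := tangent_le g g' hg' hgconv (Z t) 0
    unfold breg; linarith
  rw [hE t] at h
  calc f (X t) = Real.exp (-β t) * (Real.exp (β t) * f (X t)) := by
        rw [← mul_assoc, ← Real.exp_add]; simp
    _ ≤ _ := mul_le_mul_of_nonneg_left (by linarith) (Real.exp_pos _).le
end

section
/- Let μ > 0, let g : ℝⁿ → ℝ be a differentiable convex function, and let f : ℝⁿ → ℝ be a differentiable function that is μ-uniformly convex with respect to g and satisfies f(0) = 0 and f(x) ≥ 0 for all x. Let α, β : [0,∞) → ℝ be differentiable functions satisfying exp(α(t)) ≥ β'(t) > 0 for all t ≥ 0, and let a : [0,∞) → [0,1] be any function. Suppose X : [0,∞) → ℝⁿ is twice differentiable, and define Z(t) = X(t) + exp(−α(t))·X'(t) and Y(t) = X(t) + a(t)·(Z(t) − X(t)). Assume the curve t ↦ ∇g(Z(t)) is differentiable with derivative (d/dt)∇g(Z(t)) = −β'(t)·(∇g(Z(t)) − ∇g(Y(t)))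 − (exp(α(t))/μ)·∇f(Y(t)) for every t ≥ 0. Then the energy E(t) = exp(β(t))·(μ·D_g(0, Z(t)) + f(X(t))) is monotonically non-increasing on [0,∞), and f(X(t)) ≤ exp(−β(t))·E(0) for all t ≥ 0. -/
open Set RealInnerProductSpace

theorem breg_nonneg_aux {n : ℕ} (g : EuclideanSpace ℝ (Fin n) → ℝ)
    (g' : EuclideanSpace ℝ (Fin n) → EuclideanSpace ℝ (Fin n))
    (hg' : ∀ x, HasGradientAt g (g' x) x)
    (hgconv : ConvexOn ℝ univ g) (y x : EuclideanSpace ℝ (Fin n)) : 0 ≤ breg g g' y x := by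
  have hc : ConvexOn ℝ univ (fun t : ℝ => g (AffineMap.lineMap x y t)) :=
    hgconv.comp_affineMap (AffineMap.lineMap x y)
  have hl : HasDerivAt (fun t : ℝ => (AffineMap.lineMap x y t : EuclideanSpace ℝ (Fin n)))
      (y - x) 0 := AffineMap.hasDerivAt_lineMap
  have h1 := (hg' (AffineMap.lineMap x y (0:ℝ))).hasFDerivAt.comp_hasDerivAt (0:ℝ) hl
  have h2 := hc.le_slope_of_hasDerivAt (mem_univ (0:ℝ)) (mem_univ (1:ℝ)) one_pos h1
  simp [slope_def_field] at h2
  unfold breg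
  linarith

/-- Lyapunov convergence of the generalized model (G-ODE-UC) in the uniformly convex case. -/
theorem godeuc_energy_decay {n : ℕ} (μ : ℝ) (hμ : 0 < μ)
    (f g : EuclideanSpace ℝ (Fin n) → ℝ)
    (f' g' : EuclideanSpace ℝ (Fin n) → EuclideanSpace ℝ (Fin n))
    (hf' : ∀ x, HasGradientAt f (f' x) x)
    (hg' : ∀ x, HasGradientAt g (g' x) x)
    (hgconv : ConvexOn ℝ univ g)
    (hunif : ∀ x y, μ * breg g g' x y ≤ breg f f' x y)
    (hf0 : f 0 = 0)
    (hfnn : ∀ x, 0 ≤ f x)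
    (α β α' β' : ℝ → ℝ)
    (hα : ∀ t, 0 ≤ t → HasDerivAt α (α' t) t)
    (hβ : ∀ t, 0 ≤ t → HasDerivAt β (β' t) t)
    (hscale : ∀ t, 0 ≤ t → 0 < β' t ∧ β' t ≤ Real.exp (α t))
    (a : ℝ → ℝ)
    (ha : ∀ t, 0 ≤ t → a t ∈ Icc (0 : ℝ) 1)
    (X X' X'' Z Y : ℝ → EuclideanSpace ℝ (Fin n))
    (hX : ∀ t, 0 ≤ t → HasDerivAt X (X' t) t)
    (hX' : ∀ t, 0 ≤ t → HasDerivAt X' (X'' t) t)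
    (hZ : ∀ t, Z t = X t + Real.exp (-α t) • X' t)
    (hY : ∀ t, Y t = X t + a t • (Z t - X t))
    (hODE : ∀ t, 0 ≤ t →
      HasDerivAt (fun u => g' (Z u))
        (-(β' t) • (g' (Z t) - g' (Y t)) - (Real.exp (α t) / μ) • f' (Y t)) t)
    (E : ℝ → ℝ)
    (hE : ∀ t, E t = Real.exp (β t) * (μ * breg g g' 0 (Z t) + f (X t))) :
    AntitoneOn E (Ici 0) ∧ ∀ t, 0 ≤ t → f (X t) ≤ Real.exp (-β t) * E 0 := by
  have hgn := breg_nonneg_aux g g' hg' hgconv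
  have hder : ∀ t, 0 ≤ t → HasDerivAt E
      (Real.exp (β t) * β' t * (μ * breg g g' 0 (Z t) + f (X t)) +
        Real.exp (β t) * (μ * ⟪-(β' t) • (g' (Z t) - g' (Y t)) -
          (Real.exp (α t) / μ) • f' (Y t), Z t⟫ + ⟪f' (X t), X' t⟫)) t := by
    intro t ht
    have hZd : ∃ Z', HasDerivAt Z Z' t := by
      have : Z = fun t => X t + Real.exp (-α t) • X' t := funext hZ
      rw [this]
      exact ⟨_, (hX t ht).add (((hα t ht).neg.exp).smul (hX' t ht))⟩
    obtain ⟨Z', hZ'⟩ := hZd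
    have hgZ := (hg' (Z t)).hasFDerivAt.comp_hasDerivAt t hZ'
    have hfX := (hf' (X t)).hasFDerivAt.comp_hasDerivAt t (hX t ht)
    have hin := (hODE t ht).inner ℝ hZ'
    have hEE : E = fun t => Real.exp (β t) * (μ * (g 0 - (g ∘ Z) t + ⟪g' (Z t), Z t⟫) +
        (f ∘ X) t) := by
      funext u
      rw [hE]
      simp [breg]
    rw [hEE]
    refine ((hβ t ht).exp.mul
      ((((hgZ.const_sub (g 0)).add hin).const_mul μ).add hfX)).congr_deriv ?_
    simp [breg]
  have hle : ∀ t, 0 ≤ t → Real.exp (β t) * β' t * (μ * breg g g' 0 (Z t) + f (X t)) +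
        Real.exp (β t) * (μ * ⟪-(β' t) • (g' (Z t) - g' (Y t)) -
          (Real.exp (α t) / μ) • f' (Y t), Z t⟫ + ⟪f' (X t), X' t⟫) ≤ 0 := by
    intro t ht
    obtain ⟨hb0, hbe⟩ := hscale t ht
    obtain ⟨ha0, ha1⟩ := ha t ht
    have hXd : X' t = Real.exp (α t) • (Z t - X t) := by
      rw [hZ, add_sub_cancel_left, smul_smul, ← Real.exp_add]; simp
    have hfn : ∀ x y, 0 ≤ breg f f' x y := fun x y =>
      (mul_nonneg hμ.le (hgn x y)).trans (hunif x y)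
    have hYt := hY t
    rw [hXd]
    generalize Real.exp (α t) = e at *
    generalize β' t = b at *
    generalize a t = c at *
    generalize Z t = z at *
    generalize X t = x at *
    generalize Y t = y at *
    have key : breg f f' x y ≤ ⟪f' y, z - x⟫ - ⟪f' x, z - x⟫ := by
      rcases ha0.eq_or_lt with h | h
      · subst h
        have : y = x := by simpa using hYt
        subst this
        simp [breg]
      · have hyx : y - x = c • (z - x) := by rw [hYt]; simp
        have h1 : breg f f' x y + breg f f' y x = c * (⟪f' y, z - x⟫ - ⟪f' x, z - x⟫) := by
          have : x - y = -(c • (z - x)) := by rw [← hyx]; simp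
          simp only [breg]
          rw [this, hyx, inner_neg_right, inner_smul_right, inner_smul_right]
          ring
        have h2 := hfn x y
        have h3 := hfn y x
        have h4 : 0 ≤ ⟪f' y, z - x⟫ - ⟪f' x, z - x⟫ := by
          by_contra hh
          push Not at hh
          nlinarith
        nlinarith
    have hmain : b * (μ * breg g g' 0 z + f x) + (μ * ⟪-b • (g' z - g' y) -
          (e / μ) • f' y, z⟫ + ⟪f' x, e • (z - x)⟫) ≤ 0 := by
      have h0 := mul_le_mul_of_nonneg_left (hunif 0 y) hb0.le
      have h1 := mul_nonneg hb0.le (mul_nonneg hμ.le (hgn z y))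
      have h2 := mul_le_mul_of_nonneg_left key (hb0.le.trans hbe)
      have h3 : 0 ≤ (e - b) * (⟪f' y, x⟫ + breg f f' x y) := by
        apply mul_nonneg (by linarith)
        have h5 := hfn 0 y
        have h6 := hfnn x
        simp only [breg, inner_sub_right, inner_zero_right, hf0] at h5 ⊢
        linarith
      have hee : μ * (e / μ * ⟪f' y, z⟫) = e * ⟪f' y, z⟫ := by field_simp
      simp only [breg, inner_sub_right, inner_sub_left, inner_zero_right, hf0,
        real_inner_smul_left, inner_smul_right] at h0 h1 h2 h3 ⊢
      rw [mul_sub μ (-b * _), hee]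
      nlinarith
    have := mul_nonpos_of_nonneg_of_nonpos (Real.exp_pos (β t)).le hmain
    linarith
  have hanti : AntitoneOn E (Ici 0) := by
    apply antitoneOn_of_deriv_nonpos (convex_Ici 0)
    · exact fun t ht => (hder t ht).continuousAt.continuousWithinAt
    · intro t ht
      rw [interior_Ici] at ht
      exact (hder t (le_of_lt ht)).differentiableAt.differentiableWithinAt
    · intro t ht
      rw [interior_Ici] at ht
      rw [(hder t (le_of_lt ht)).deriv]
      exact hle t (le_of_lt ht)
  refine ⟨hanti, fun t ht => ?_⟩
  have h := hanti (mem_Ici.2 le_rfl) (mem_Ici.2 ht) ht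
  have h2 := mul_le_mul_of_nonneg_left h (Real.exp_pos (-β t)).le
  refine le_trans ?_ h2
  rw [hE t, ← mul_assoc, ← Real.exp_add]
  have := mul_nonneg hμ.le (hgn 0 (Z t))
  simp
  linarith
end

section
/- Let f : ℝⁿ → ℝ be a differentiable convex function whose gradient ∇f is L-Lipschitz (L > 0). Let (x_k)_{k ≥ 0} and (y_k)_{k ≥ 1} be sequences in ℝⁿ generated by Nesterov's two-sequence method: y_k = x_k + b_k·(x_k − x_{k−1}) and x_{k+1} = y_k − s_k·∇f(y_k) for k ≥ 1, where 0 < s_k ≤ 1/L and 0 < b_k ≤ 1 for all k. If ⟨x_{k+1} − 2x_k + x_{k−1}, x_k − x_{k−1}⟩ ≥ 0 for all k ≥ 1, then for every k ≥ 1 one has f(x_{k+1}) ≤ f(x_k), with strict inequality f(x_{k+1}) < f(x_k) whenever ∇f(y_k) ≠ 0. -/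
open Set RealInnerProductSpace

theorem grad_ineq_aux {n : ℕ}
    (f : EuclideanSpace ℝ (Fin n) → ℝ)
    (f' : EuclideanSpace ℝ (Fin n) → EuclideanSpace ℝ (Fin n))
    (hf' : ∀ x, HasGradientAt f (f' x) x)
    (hfconv : ConvexOn ℝ univ f) (z w : EuclideanSpace ℝ (Fin n)) :
    f z + ⟪f' z, w⟫ ≤ f (z + w) := by
  have hd : HasDerivAt (fun t : ℝ => f (z + t • w)) ⟪f' z, w⟫ 0 := by
    have h1 : HasDerivAt (fun t : ℝ => z + t • w) w 0 := by
      simpa using ((hasDerivAt_id (0 : ℝ)).smul_const w).const_add z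
    have h2 := (hf' (z + (0 : ℝ) • w)).hasFDerivAt.comp_hasDerivAt (0 : ℝ) h1
    simpa [Function.comp_def] using h2
  have hc : ConvexOn ℝ univ (fun t : ℝ => f (z + t • w)) := by
    refine ⟨convex_univ, fun t _ u _ a c ha hc hac => ?_⟩
    have h := hfconv.2 (mem_univ (z + t • w)) (mem_univ (z + u • w)) ha hc hac
    have e : z + (a • t + c • u) • w = a • (z + t • w) + c • (z + u • w) := by
      obtain rfl : c = 1 - a := by linarith
      simp only [smul_eq_mul]
      module
    simpa only [e] using h
  have h := hc.le_slope_of_hasDerivAt (mem_univ 0) (mem_univ 1) one_pos hd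
  simp [slope_def_field] at h
  linarith

theorem grad_lower_aux {n : ℕ}
    (f' : EuclideanSpace ℝ (Fin n) → EuclideanSpace ℝ (Fin n))
    (L : ℝ) (hL : 0 < L)
    (hlip : LipschitzWith (Real.toNNReal L) f')
    (y : EuclideanSpace ℝ (Fin n)) (t : ℝ) (ht : 0 ≤ t) :
    (1 - L * t) * ‖f' y‖ ^ 2 ≤ ⟪f' (y - t • f' y), f' y⟫ := by
  have h := hlip.dist_le_mul y (y - t • f' y)
  rw [dist_eq_norm, dist_eq_norm, Real.coe_toNNReal _ hL.le, sub_sub_cancel, norm_smul,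
    Real.norm_of_nonneg ht] at h
  have h2 := real_inner_le_norm (f' y - f' (y - t • f' y)) (f' y)
  rw [inner_sub_left, real_inner_self_eq_norm_sq] at h2
  nlinarith [mul_le_mul_of_nonneg_right h (norm_nonneg (f' y))]

/-- Monotone decrease of the objective values along Nesterov's two-sequence method
under the restart condition `⟨x_{k+1} − 2x_k + x_{k−1}, x_k − x_{k−1}⟩ ≥ 0`. -/
theorem nesterov_restart_monotone {n : ℕ}
    (f : EuclideanSpace ℝ (Fin n) → ℝ)
    (f' : EuclideanSpace ℝ (Fin n) → EuclideanSpace ℝ (Fin n))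
    (L : ℝ) (hL : 0 < L)
    (hf' : ∀ x, HasGradientAt f (f' x) x)
    (hfconv : ConvexOn ℝ univ f)
    (hlip : LipschitzWith (Real.toNNReal L) f')
    (x y : ℕ → EuclideanSpace ℝ (Fin n))
    (b s : ℕ → ℝ)
    (hs : ∀ k, 0 < s k ∧ s k ≤ 1 / L)
    (hb : ∀ k, 0 < b k ∧ b k ≤ 1)
    (hy : ∀ k, 1 ≤ k → y k = x k + b k • (x k - x (k - 1)))
    (hx : ∀ k, 1 ≤ k → x (k + 1) = y k - s k • f' (y k))
    (hrestart : ∀ k, 1 ≤ k →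
      0 ≤ ⟪x (k + 1) - (2 : ℝ) • x k + x (k - 1), x k - x (k - 1)⟫) :
    ∀ k, 1 ≤ k →
      f (x (k + 1)) ≤ f (x k) ∧ (f' (y k) ≠ 0 → f (x (k + 1)) < f (x k)) := by
  intro k hk
  obtain ⟨s0, s1⟩ := hs k
  obtain ⟨b0, b1⟩ := hb k
  have hLs : L * s k ≤ 1 := by
    rw [le_div_iff₀ hL] at s1
    linarith
  have hr := hrestart k hk
  have hyk := hy k hk
  have hxk := hx k hk
  set d := x k - x (k - 1) with hd
  set g := f' (y k) with hg
  have e1 : x (k + 1) - (2 : ℝ) • x k + x (k - 1) = (b k - 1) • d - s k • g := by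
    rw [hxk, hyk, hd]
    module
  rw [e1, inner_sub_left, real_inner_smul_left, real_inner_smul_left,
    real_inner_self_eq_norm_sq] at hr
  have hgd : ⟪g, d⟫ ≤ 0 := by
    by_contra hcon
    push Not at hcon
    nlinarith [mul_pos s0 hcon, mul_nonneg (sub_nonneg.2 b1) (sq_nonneg ‖d‖)]
  have A := grad_ineq_aux f f' hf' hfconv (y k) (-(b k • d))
  have e2 : y k + -(b k • d) = x k := by
    rw [hyk]
    module
  rw [e2, inner_neg_right, real_inner_smul_right, ← hg] at A
  have B := grad_ineq_aux f f' hf' hfconv (y k - (s k / 2) • g) ((s k / 2) • g)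
  rw [sub_add_cancel, real_inner_smul_right] at B
  have C := grad_ineq_aux f f' hf' hfconv (y k - s k • g) ((s k / 2) • g)
  have e3 : y k - s k • g + (s k / 2) • g = y k - (s k / 2) • g := by module
  rw [e3, real_inner_smul_right, ← hxk] at C
  have D := grad_lower_aux f' L hL hlip (y k) (s k / 2) (by linarith)
  have E := grad_lower_aux f' L hL hlip (y k) (s k) s0.le
  rw [← hg] at D E
  rw [← hxk] at E
  have D' : ‖g‖ ^ 2 / 2 ≤ ⟪f' (y k - (s k / 2) • g), g⟫ := by
    nlinarith [mul_nonneg (sub_nonneg.2 hLs) (sq_nonneg ‖g‖)]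
  have E' : 0 ≤ ⟪f' (x (k + 1)), g⟫ :=
    le_trans (mul_nonneg (sub_nonneg.2 hLs) (sq_nonneg ‖g‖)) E
  have F : b k * ⟪g, d⟫ ≤ 0 := mul_nonpos_of_nonneg_of_nonpos b0.le hgd
  have G := mul_le_mul_of_nonneg_left D' (half_pos s0).le
  have H := mul_nonneg (half_pos s0).le E'
  have key : f (x (k + 1)) + s k / 2 * (‖g‖ ^ 2 / 2) ≤ f (x k) := by linarith
  refine ⟨?_, fun hne => ?_⟩
  · have : 0 ≤ s k / 2 * (‖g‖ ^ 2 / 2) := by positivity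
    linarith
  · have : 0 < s k / 2 * (‖g‖ ^ 2 / 2) := by
      have := norm_pos_iff.2 hne
      positivity
    linarith
end

section
/- Let f : ℝⁿ → ℝ be a differentiable convex function with f(0) = 0 and f(x) ≥ 0 for all x, and let g : ℝⁿ → ℝ be a differentiable convex function. Let α, β : [0,∞) → ℝ be differentiable functions satisfying exp(α(t)) ≥ β'(t) > 0 for all t ≥ 0. Suppose Z : [0,∞) → ℝⁿ is differentiable and the curve t ↦ ∇g(Z(t)) is differentiable with derivative (d/dt)∇g(Z(t)) = −exp(α(t)+β(t))·∇f(Z(t)) for every t ≥ 0. Then the energy Ẽ(t) = D_g(0, Z(t)) + exp(β(t))·f(Z(t)) is monotonically non-increasing on [0,∞), and f(Z(t)) ≤ exp(−β(t))·Ẽ(0) for all t ≥ 0. -/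
open Set RealInnerProductSpace

theorem grad_ineq {n : ℕ} (f : EuclideanSpace ℝ (Fin n) → ℝ)
    (v x y : EuclideanSpace ℝ (Fin n)) (hf : HasGradientAt f v x)
    (hc : ConvexOn ℝ univ f) : f x + ⟪v, y - x⟫ ≤ f y := by
  have hl : HasDerivAt (fun s : ℝ => x + s • (y - x)) (y - x) 0 := by
    simpa using ((hasDerivAt_id (0:ℝ)).smul_const (y - x)).const_add x
  have h1 : HasDerivAt (fun s : ℝ => f (x + s • (y - x))) ⟪v, y - x⟫ 0 := by
    have hf2 : HasFDerivAt f (InnerProductSpace.toDual ℝ _ v) (x + (0:ℝ) • (y - x)) := by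
      simpa using hf.hasFDerivAt
    have := hf2.comp_hasDerivAt (0:ℝ) hl
    simpa [Function.comp_def] using this
  have h2 : ConvexOn ℝ univ (fun s : ℝ => f (x + s • (y - x))) := by
    refine ⟨convex_univ, fun a _ b _ p q hp hq hpq => ?_⟩
    have := hc.2 (mem_univ (x + a • (y - x))) (mem_univ (x + b • (y - x))) hp hq hpq
    refine le_trans (le_of_eq ?_) this
    dsimp only
    congr 1
    have : x = (p + q) • x := by rw [hpq, one_smul]
    nth_rewrite 1 [this]
    simp only [smul_eq_mul]
    module
  have h3 := h2.le_slope_of_hasDerivAt (mem_univ 0) (mem_univ 1) one_pos h1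
  simp [slope_def_field] at h3
  linarith

/-- Lyapunov convergence of (G-ODE-C) specialized to `a(t) ≡ 1`, i.e. the single-variable
dynamics `(d/dt)∇g(Z) = −e^{α+β}∇f(Z)`, in the convex case. -/
theorem godec_a_one_energy_decay {n : ℕ}
    (f g : EuclideanSpace ℝ (Fin n) → ℝ)
    (f' g' : EuclideanSpace ℝ (Fin n) → EuclideanSpace ℝ (Fin n))
    (hf' : ∀ x, HasGradientAt f (f' x) x)
    (hg' : ∀ x, HasGradientAt g (g' x) x)
    (hfconv : ConvexOn ℝ univ f)
    (hgconv : ConvexOn ℝ univ g)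
    (hf0 : f 0 = 0)
    (hfnn : ∀ x, 0 ≤ f x)
    (α β α' β' : ℝ → ℝ)
    (hα : ∀ t, 0 ≤ t → HasDerivAt α (α' t) t)
    (hβ : ∀ t, 0 ≤ t → HasDerivAt β (β' t) t)
    (hscale : ∀ t, 0 ≤ t → 0 < β' t ∧ β' t ≤ Real.exp (α t))
    (Z Z' : ℝ → EuclideanSpace ℝ (Fin n))
    (hZ : ∀ t, 0 ≤ t → HasDerivAt Z (Z' t) t)
    (hODE : ∀ t, 0 ≤ t →
      HasDerivAt (fun u => g' (Z u)) (-(Real.exp (α t + β t)) • f' (Z t)) t)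
    (E : ℝ → ℝ)
    (hE : ∀ t, E t = breg g g' 0 (Z t) + Real.exp (β t) * f (Z t)) :
    AntitoneOn E (Ici 0) ∧ ∀ t, 0 ≤ t → f (Z t) ≤ Real.exp (-β t) * E 0 := by
  have key : ∀ t, 0 ≤ t → ⟪f' (Z t), Z' t⟫ ≤ 0 := by
    intro t ht
    have hW := hasDerivAt_iff_tendsto_slope.1 (hODE t ht)
    have hZ2 := hasDerivAt_iff_tendsto_slope.1 (hZ t ht)
    have h0 : 0 ≤ ⟪-(Real.exp (α t + β t)) • f' (Z t), Z' t⟫ := by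
      refine ge_of_tendsto' (hW.inner hZ2) fun u => ?_
      have a := grad_ineq g _ (Z t) (Z u) (hg' _) hgconv
      have b := grad_ineq g _ (Z u) (Z t) (hg' _) hgconv
      have c : 0 ≤ ⟪g' (Z u) - g' (Z t), Z u - Z t⟫ := by
        rw [← neg_sub (Z u) (Z t), inner_neg_right] at b
        rw [inner_sub_left]
        linarith
      simp only [slope, vsub_eq_sub, real_inner_smul_left, real_inner_smul_right]
      rw [← mul_assoc]
      exact mul_nonneg (mul_self_nonneg _) c
    rw [real_inner_smul_left] at h0
    have := Real.exp_pos (α t + β t)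
    by_contra! h
    nlinarith
  have hder : ∀ t, 0 ≤ t → HasDerivAt E
      (-(Real.exp (α t + β t)) * ⟪f' (Z t), Z t⟫ + (Real.exp (β t) * β' t * f (Z t)
        + Real.exp (β t) * ⟪f' (Z t), Z' t⟫)) t := by
    intro t ht
    have hEe : E = fun t => (g 0 - g (Z t) + ⟪g' (Z t), Z t⟫) + Real.exp (β t) * f (Z t) := by
      funext u
      rw [hE, breg, zero_sub, inner_neg_right]
      ring
    have h1 : HasDerivAt (fun u => g (Z u)) ⟪g' (Z t), Z' t⟫ t := by
      simpa [Function.comp_def] using (hg' (Z t)).hasFDerivAt.comp_hasDerivAt t (hZ t ht)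
    have h2 : HasDerivAt (fun u => f (Z u)) ⟪f' (Z t), Z' t⟫ t := by
      simpa [Function.comp_def] using (hf' (Z t)).hasFDerivAt.comp_hasDerivAt t (hZ t ht)
    have h3 := (hODE t ht).inner ℝ (hZ t ht)
    rw [hEe]
    refine (((h1.const_sub (g 0)).add h3).add ((hβ t ht).exp.mul h2)).congr_deriv ?_
    rw [real_inner_smul_left]
    ring
  have hanti : AntitoneOn E (Ici 0) := by
    refine antitoneOn_of_deriv_nonpos (convex_Ici 0)
      (fun t ht => (hder t ht).continuousAt.continuousWithinAt)
      (fun t ht => (hder t (interior_subset ht)).differentiableAt.differentiableWithinAt) ?_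
    intro t ht
    have ht : 0 ≤ t := interior_subset ht
    rw [(hder t ht).deriv, Real.exp_add]
    have a := grad_ineq f _ (Z t) 0 (hf' _) hfconv
    rw [zero_sub, inner_neg_right, hf0] at a
    have b1 : β' t * f (Z t) ≤ Real.exp (α t) * f (Z t) :=
      mul_le_mul_of_nonneg_right (hscale t ht).2 (hfnn _)
    have b2 : Real.exp (α t) * f (Z t) ≤ Real.exp (α t) * ⟪f' (Z t), Z t⟫ :=
      mul_le_mul_of_nonneg_left (by linarith) (Real.exp_pos _).le
    have c := mul_nonneg (Real.exp_pos (β t)).le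
      (sub_nonneg.2 (b1.trans b2))
    have d := mul_nonneg (Real.exp_pos (β t)).le (neg_nonneg.2 (key t ht))
    linarith
  refine ⟨hanti, fun t ht => ?_⟩
  have h1 := hanti (mem_Ici.2 le_rfl) (mem_Ici.2 ht) ht
  rw [hE t] at h1
  have h2 : 0 ≤ breg g g' 0 (Z t) := by
    have := grad_ineq g _ (Z t) 0 (hg' _) hgconv
    unfold breg
    linarith
  have h3 : Real.exp (β t) * f (Z t) ≤ E 0 := by linarith
  calc f (Z t) = Real.exp (-β t) * (Real.exp (β t) * f (Z t)) := by
        rw [← mul_assoc, ← Real.exp_add]; simp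
    _ ≤ _ := mul_le_mul_of_nonneg_left h3 (Real.exp_pos _).le
end

section
/- Let μ > 0, let g : ℝⁿ → ℝ be a differentiable convex function, and let f : ℝⁿ → ℝ be a differentiable function that is μ-uniformly convex with respect to g and satisfies f(0) = 0 and f(x) ≥ 0 for all x. Let α, β : [0,∞) → ℝ be differentiable functions satisfying exp(α(t)) ≥ β'(t) > 0 for all t ≥ 0. Suppose Z : [0,∞) → ℝⁿ is differentiable and the curve t ↦ ∇g(Z(t)) is differentiable with derivative (d/dt)∇g(Z(t)) = −(exp(α(t))/μ)·∇f(Z(t)) for every t ≥ 0. Then the energy Ẽ(t) = exp(β(t))·(μ·D_g(0, Z(t)) + f(Z(t))) is monotonically non-increasing on [0,∞), and f(Z(t)) ≤ exp(−β(t))·Ẽ(0) for all t ≥ 0. -/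
open Set RealInnerProductSpace

/-- Lyapunov convergence of (G-ODE-UC) specialized to `a(t) ≡ 1`, i.e. the single-variable
dynamics `(d/dt)∇g(Z) = −(e^{α}/μ)∇f(Z)`, in the uniformly convex case. -/
theorem godeuc_a_one_energy_decay {n : ℕ} (μ : ℝ) (hμ : 0 < μ)
    (f g : EuclideanSpace ℝ (Fin n) → ℝ)
    (f' g' : EuclideanSpace ℝ (Fin n) → EuclideanSpace ℝ (Fin n))
    (hf' : ∀ x, HasGradientAt f (f' x) x)
    (hg' : ∀ x, HasGradientAt g (g' x) x)
    (hgconv : ConvexOn ℝ univ g)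
    (hunif : ∀ x y, μ * breg g g' x y ≤ breg f f' x y)
    (hf0 : f 0 = 0)
    (hfnn : ∀ x, 0 ≤ f x)
    (α β α' β' : ℝ → ℝ)
    (hα : ∀ t, 0 ≤ t → HasDerivAt α (α' t) t)
    (hβ : ∀ t, 0 ≤ t → HasDerivAt β (β' t) t)
    (hscale : ∀ t, 0 ≤ t → 0 < β' t ∧ β' t ≤ Real.exp (α t))
    (Z Z' : ℝ → EuclideanSpace ℝ (Fin n))
    (hZ : ∀ t, 0 ≤ t → HasDerivAt Z (Z' t) t)
    (hODE : ∀ t, 0 ≤ t →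
      HasDerivAt (fun u => g' (Z u)) (-(Real.exp (α t) / μ) • f' (Z t)) t)
    (E : ℝ → ℝ)
    (hE : ∀ t, E t = Real.exp (β t) * (μ * breg g g' 0 (Z t) + f (Z t))) :
    AntitoneOn E (Ici 0) ∧ ∀ t, 0 ≤ t → f (Z t) ≤ Real.exp (-β t) * E 0 := by
  have hnn := breg_nonneg_aux g g' hg' hgconv
  have hpos : ∀ t, 0 ≤ μ * breg g g' 0 (Z t) := fun t => mul_nonneg hμ.le (hnn _ _)
  have hmono : ∀ x y, 0 ≤ ⟪g' x - g' y, x - y⟫ := by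
    intro x y
    have h1 := hnn x y
    have h2 := hnn y x
    unfold breg at h1 h2
    rw [← neg_sub x y, inner_neg_right] at h2
    rw [inner_sub_left]
    linarith
  have hZ' : ∀ t, 0 ≤ t → ⟪f' (Z t), Z' t⟫ ≤ 0 := by
    intro t ht
    have h1 := (hasDerivAt_iff_tendsto_slope.1 (hODE t ht)).inner
      (hasDerivAt_iff_tendsto_slope.1 (hZ t ht)) (𝕜 := ℝ)
    have h2 := ge_of_tendsto' h1 (b := 0) (fun s => by
      simp only [slope, vsub_eq_sub, real_inner_smul_left, real_inner_smul_right]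
      rw [← mul_assoc]
      exact mul_nonneg (mul_self_nonneg _) (hmono _ _))
    rw [real_inner_smul_left] at h2
    have h3 : 0 < Real.exp (α t) / μ := div_pos (Real.exp_pos _) hμ
    by_contra hcon
    push Not at hcon
    nlinarith [mul_pos h3 hcon]
  have hder : ∀ t, 0 ≤ t → HasDerivAt E (Real.exp (β t) * β' t *
      (μ * breg g g' 0 (Z t) + f (Z t)) + Real.exp (β t) *
      (-(Real.exp (α t) * ⟪f' (Z t), Z t⟫) + ⟪f' (Z t), Z' t⟫)) t := by
    intro t ht
    have hEf : E = fun t => Real.exp (β t) * (μ * breg g g' 0 (Z t) + f (Z t)) := funext hE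
    rw [hEf]
    have hfz : HasDerivAt (fun u => f (Z u)) ⟪f' (Z t), Z' t⟫ t := by
      exact (hf' (Z t)).hasFDerivAt.comp_hasDerivAt t (hZ t ht)
    have hgz : HasDerivAt (fun u => g (Z u)) ⟪g' (Z t), Z' t⟫ t := by
      exact (hg' (Z t)).hasFDerivAt.comp_hasDerivAt t (hZ t ht)
    have hin := (hODE t ht).inner ℝ ((hZ t ht).const_sub 0)
    have hb : HasDerivAt (fun u => breg g g' 0 (Z u))
        (-(Real.exp (α t) / μ) * ⟪f' (Z t), Z t⟫) t := by
      unfold breg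
      refine ((hgz.const_sub (g 0)).sub hin).congr_deriv ?_
      simp only [zero_sub, inner_neg_right, real_inner_smul_left]
      ring
    refine ((hβ t ht).exp.mul ((hb.const_mul μ).add hfz)).congr_deriv ?_
    simp only [Pi.add_apply]
    field_simp
  have hanti : AntitoneOn E (Ici 0) := by
    refine antitoneOn_of_hasDerivWithinAt_nonpos (convex_Ici 0)
      (fun t ht => (hder t ht).continuousAt.continuousWithinAt)
      (fun t ht => (hder t (interior_subset ht)).hasDerivWithinAt) ?_
    intro t ht
    have ht : 0 ≤ t := interior_subset ht
    have h1 := hunif 0 (Z t)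
    have h2 : breg f f' 0 (Z t) = - f (Z t) + ⟪f' (Z t), Z t⟫ := by
      simp [breg, hf0]
    rw [h2] at h1
    have h3 : β' t * (μ * breg g g' 0 (Z t) + f (Z t)) ≤ Real.exp (α t) * ⟪f' (Z t), Z t⟫ :=
      mul_le_mul (hscale t ht).2 (by linarith) (add_nonneg (hpos t) (hfnn _)) (Real.exp_pos _).le
    have h4 := hZ' t ht
    rw [mul_assoc, ← mul_add]
    exact mul_nonpos_of_nonneg_of_nonpos (Real.exp_pos _).le (by linarith)
  refine ⟨hanti, fun t ht => ?_⟩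
  have h1 : E t ≤ E 0 := hanti (mem_Ici.2 le_rfl) (mem_Ici.2 ht) ht
  have h2 : Real.exp (-β t) * E t = μ * breg g g' 0 (Z t) + f (Z t) := by
    rw [hE, ← mul_assoc, ← Real.exp_add]
    simp
  have h3 := mul_le_mul_of_nonneg_left h1 (Real.exp_pos (-β t)).le
  linarith [hpos t]
end

section
/- Let μ > 0, let g : ℝⁿ → ℝ be a differentiable convex function, and let f : ℝⁿ → ℝ be a differentiable function that is μ-uniformly convex with respect to g and satisfies f(0) = 0 and f(x) ≥ 0 for all x. Let A, B ∈ ℝ with exp(A) ≥ B > 0, let a ∈ [0,1], and let x, v ∈ ℝⁿ. Define Y = x + a·exp(−A)·v and Z = x + exp(−A)·v. Then exp(A)·⟨∇f(Y), Z⟩ ≥ B·f(x) + ⟨∇f(x), v⟩ + μ·B·(D_g(0, Y) + D_g(Y, x)). -/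
open Set RealInnerProductSpace

/-- Key pointwise inequality in the Lyapunov analysis of (G-ODE-UC):
`e^A ⟨∇f(Y), Z⟩ ≥ B f(x) + ⟨∇f(x), v⟩ + μ B (D_g(0,Y) + D_g(Y,x))` where
`Y = x + a e^{−A} v` and `Z = x + e^{−A} v`. -/
theorem godeuc_key_inequality {n : ℕ} (μ : ℝ) (hμ : 0 < μ)
    (f g : EuclideanSpace ℝ (Fin n) → ℝ)
    (f' g' : EuclideanSpace ℝ (Fin n) → EuclideanSpace ℝ (Fin n))
    (hf' : ∀ x, HasGradientAt f (f' x) x)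
    (hg' : ∀ x, HasGradientAt g (g' x) x)
    (hgconv : ConvexOn ℝ univ g)
    (hunif : ∀ x y, μ * breg g g' x y ≤ breg f f' x y)
    (hf0 : f 0 = 0)
    (hfnn : ∀ x, 0 ≤ f x)
    (A B : ℝ) (hB : 0 < B) (hAB : B ≤ Real.exp A)
    (a : ℝ) (ha : a ∈ Icc (0 : ℝ) 1)
    (x v Y Z : EuclideanSpace ℝ (Fin n))
    (hY : Y = x + (a * Real.exp (-A)) • v)
    (hZ : Z = x + Real.exp (-A) • v) :
    B * f x + ⟪f' x, v⟫ + μ * B * (breg g g' 0 Y + breg g g' Y x) ≤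
      Real.exp A * ⟪f' Y, Z⟫ := by
  have hD := breg_nonneg_aux g g' hg' hgconv
  have h1 := hunif 0 Y
  have h2 := hunif Y x
  have h3 := hunif x Y
  have p1 := hD 0 Y
  have p2 := hD Y x
  have p3 := mul_nonneg hμ.le (hD x Y)
  have p4 := mul_nonneg hμ.le p2
  have hE : Real.exp A * Real.exp (-A) = 1 := by rw [← Real.exp_add]; simp
  have hEp := Real.exp_pos A
  have hep := Real.exp_pos (-A)
  have hZY : Z = Y + ((1 - a) * Real.exp (-A)) • v := by
    rw [hZ, hY]; module
  have hYx : Y - x = (a * Real.exp (-A)) • v := by rw [hY]; module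
  have hxY : x - Y = -((a * Real.exp (-A)) • v) := by rw [hY]; module
  have b1 : breg f f' 0 Y = - f Y + ⟪f' Y, Y⟫ := by
    simp [breg, hf0]
  have b2 : breg f f' Y x = f Y - f x - a * Real.exp (-A) * ⟪f' x, v⟫ := by
    rw [breg, hYx, real_inner_smul_right]
  have b3 : breg f f' x Y = f x - f Y + a * Real.exp (-A) * ⟪f' Y, v⟫ := by
    rw [breg, hxY, inner_neg_right, real_inner_smul_right]; ring
  have hmono : ⟪f' x, v⟫ ≤ ⟪f' Y, v⟫ := by
    rcases ha.1.eq_or_lt with h0 | h0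
    · have : Y = x := by rw [hY, ← h0]; simp
      rw [this]
    · have hp := mul_pos h0 hep
      refine le_of_mul_le_mul_left ?_ hp
      linarith
  have hZi : Real.exp A * ⟪f' Y, Z⟫ = Real.exp A * ⟪f' Y, Y⟫ + (1 - a) * ⟪f' Y, v⟫ := by
    rw [hZY, inner_add_right, real_inner_smul_right]
    linear_combination ((1 - a) * ⟪f' Y, v⟫) * hE
  rw [hZi]
  have q1 : f x + μ * (breg g g' 0 Y + breg g g' Y x) ≤
      ⟪f' Y, Y⟫ - a * Real.exp (-A) * ⟪f' x, v⟫ := by linarith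
  have q2 := mul_le_mul_of_nonneg_left q1 hEp.le
  have q3 : 0 ≤ f x + μ * (breg g g' 0 Y + breg g g' Y x) :=
    add_nonneg (hfnn x) (mul_nonneg hμ.le (add_nonneg p1 p2))
  have q4 := mul_le_mul_of_nonneg_right hAB q3
  have q5 := mul_le_mul_of_nonneg_left hmono (sub_nonneg.2 ha.2)
  have q6 : Real.exp A * (⟪f' Y, Y⟫ - a * Real.exp (-A) * ⟪f' x, v⟫) =
      Real.exp A * ⟪f' Y, Y⟫ - a * ⟪f' x, v⟫ := by
    linear_combination (-(a * ⟪f' x, v⟫)) * hE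
  linarith
end

section
/- Let f : ℝⁿ → ℝ be a differentiable convex function, let b ∈ (0,1], let s > 0, and let x_prev, x, y, x_next ∈ ℝⁿ satisfy y = x + b·(x − x_prev) and x_next = y − s·∇f(y). Then f(y) − f(x) ≤ −(b/s)·⟨x_next − 2x + x_prev, x − x_prev⟩. -/
open Set RealInnerProductSpace

/-- Central inequality in the proof of the restart guarantee:
`f(y) − f(x) ≤ −(b/s)⟨x₊ − 2x + x₋, x − x₋⟩` along one step of Nesterov's
two-sequence method. -/
theorem nesterov_restart_central_inequality {n : ℕ}
    (f : EuclideanSpace ℝ (Fin n) → ℝ)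
    (f' : EuclideanSpace ℝ (Fin n) → EuclideanSpace ℝ (Fin n))
    (hf' : ∀ x, HasGradientAt f (f' x) x)
    (hfconv : ConvexOn ℝ univ f)
    (b s : ℝ) (hb : 0 < b) (hb1 : b ≤ 1) (hs : 0 < s)
    (xPrev x y xNext : EuclideanSpace ℝ (Fin n))
    (hy : y = x + b • (x - xPrev))
    (hxNext : xNext = y - s • f' y) :
    f y - f x ≤ -(b / s) * ⟪xNext - (2 : ℝ) • x + xPrev, x - xPrev⟫ := by
  have key : f y - f x ≤ b * ⟪f' y, x - xPrev⟫ := by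
    have hc : ConvexOn ℝ univ (f ∘ (AffineMap.lineMap y x : ℝ →ᵃ[ℝ] EuclideanSpace ℝ (Fin n))) := by
      simpa using hfconv.comp_affineMap (AffineMap.lineMap y x : ℝ →ᵃ[ℝ] EuclideanSpace ℝ (Fin n))
    have hl : HasDerivAt (AffineMap.lineMap y x : ℝ → EuclideanSpace ℝ (Fin n)) (x - y) (0 : ℝ) :=
      AffineMap.hasDerivAt_lineMap
    have hg := (hf' y).hasFDerivAt
    have hd := HasFDerivAt.comp_hasDerivAt_of_eq (0 : ℝ) hg hl (by simp)
    have h := hc.le_slope_of_hasDerivAt (mem_univ 0) (mem_univ 1) zero_lt_one hd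
    simp only [slope_def_field, Function.comp, AffineMap.lineMap_apply_one,
      AffineMap.lineMap_apply_zero, InnerProductSpace.toDual_apply_apply] at h
    have e : x - y = -(b • (x - xPrev)) := by rw [hy]; abel
    rw [e, inner_neg_right, real_inner_smul_right] at h
    linarith
  have e : xNext - (2 : ℝ) • x + xPrev = (b - 1) • (x - xPrev) - s • f' y := by
    rw [hxNext]
    nth_rewrite 1 [hy]
    module
  rw [e, inner_sub_left, real_inner_smul_left, real_inner_smul_left, real_inner_self_eq_norm_sq]
  have e2 : -(b / s) * ((b - 1) * ‖x - xPrev‖ ^ 2 - s * ⟪f' y, x - xPrev⟫)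
      = b / s * (1 - b) * ‖x - xPrev‖ ^ 2 + b * ⟪f' y, x - xPrev⟫ := by
    field_simp
    ring
  rw [e2]
  have h1 : 0 ≤ 1 - b := by linarith
  have : 0 ≤ b / s * (1 - b) * ‖x - xPrev‖ ^ 2 := by positivity
  linarith
end

section
/- Let f : ℝⁿ → ℝ be a differentiable convex function, and let b, c₁, c₂ : [0,∞) → ℝ be functions with b(t) > 0, c₁(t) > 0, c₂(t) > 0 for all t. Suppose X : [0,∞) → ℝⁿ is twice differentiable and satisfies Ẍ(t) + c₁(t)·Ẋ(t) + c₂(t)·∇f(X(t) + b(t)·Ẋ(t)) = 0 for all t ≥ 0. Then for every t ≥ 0, the derivative of t ↦ f(X(t)) satisfies (d/dt) f(X(t)) ≤ −(1/(2·c₂(t)))·(d/dt)‖Ẋ(t)‖² − (c₁(t)/c₂(t))·‖Ẋ(t)‖². In particular, on any interval where (d/dt)‖Ẋ(t)‖² ≥ 0 and Ẋ(t) ≠ 0, the function t ↦ f(X(t)) is strictly decreasing. -/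
open Set RealInnerProductSpace

theorem grad_mono_aux {n : ℕ}
    (f : EuclideanSpace ℝ (Fin n) → ℝ)
    (f' : EuclideanSpace ℝ (Fin n) → EuclideanSpace ℝ (Fin n))
    (hf' : ∀ x, HasGradientAt f (f' x) x)
    (hfconv : ConvexOn ℝ univ f) (x v : EuclideanSpace ℝ (Fin n)) (b : ℝ) (hb : 0 < b) :
    inner ℝ (f' x) v ≤ inner ℝ (f' (x + b • v)) v := by
  have hd : ∀ s : ℝ, HasDerivAt (fun s : ℝ => f (x + s • v)) (inner ℝ (f' (x + s • v)) v) s := by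
    intro s
    have h1 : HasDerivAt (fun s : ℝ => x + s • v) v s := by
      simpa using ((hasDerivAt_id s).smul_const v).const_add x
    have h2 := (hf' (x + s • v)).hasFDerivAt.comp_hasDerivAt s h1
    simp only [InnerProductSpace.toDual_apply_apply] at h2
    exact h2
  have hc : ConvexOn ℝ univ (fun s : ℝ => f (x + s • v)) := by
    refine ⟨convex_univ, ?_⟩
    intro s _ t _ p q hp hq hpq
    have h := hfconv.2 (mem_univ (x + s • v)) (mem_univ (x + t • v)) hp hq hpq
    have e : x + (p • s + q • t) • v = p • (x + s • v) + q • (x + t • v) := by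
      have : q = 1 - p := by linarith
      subst this
      simp only [smul_eq_mul]
      module
    simp only [e]
    exact h
  have h1 := hc.le_slope_of_hasDerivAt (mem_univ 0) (mem_univ b) hb (hd 0)
  have h2 := hc.slope_le_of_hasDerivAt (mem_univ 0) (mem_univ b) hb (hd b)
  simpa using h1.trans h2

/-- Continuous-time inequality motivating the restart scheme: along the unified
second-order dynamics `Ẍ + c₁ Ẋ + c₂ ∇f(X + b Ẋ) = 0`, the objective satisfies
`(d/dt) f(X) ≤ −(1/(2c₂)) (d/dt)‖Ẋ‖² − (c₁/c₂)‖Ẋ‖²`, and it strictly decreases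
on intervals where the speed is non-decreasing and nonzero. -/
theorem restart_continuous_descent {n : ℕ}
    (f : EuclideanSpace ℝ (Fin n) → ℝ)
    (f' : EuclideanSpace ℝ (Fin n) → EuclideanSpace ℝ (Fin n))
    (hf' : ∀ x, HasGradientAt f (f' x) x)
    (hfconv : ConvexOn ℝ univ f)
    (b c₁ c₂ : ℝ → ℝ)
    (hbpos : ∀ t, 0 ≤ t → 0 < b t)
    (hc₁pos : ∀ t, 0 ≤ t → 0 < c₁ t)
    (hc₂pos : ∀ t, 0 ≤ t → 0 < c₂ t)
    (X X' X'' : ℝ → EuclideanSpace ℝ (Fin n))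
    (hX : ∀ t, 0 ≤ t → HasDerivAt X (X' t) t)
    (hX' : ∀ t, 0 ≤ t → HasDerivAt X' (X'' t) t)
    (hODE : ∀ t, 0 ≤ t →
      X'' t + c₁ t • X' t + c₂ t • f' (X t + b t • X' t) = 0) :
    (∀ t, 0 ≤ t →
      deriv (fun u => f (X u)) t ≤
        -(1 / (2 * c₂ t)) * deriv (fun u => ‖X' u‖ ^ 2) t -
          (c₁ t / c₂ t) * ‖X' t‖ ^ 2) ∧
    (∀ t₁ t₂ : ℝ, 0 ≤ t₁ → t₁ < t₂ →
      (∀ t ∈ Icc t₁ t₂, 0 ≤ deriv (fun u => ‖X' u‖ ^ 2) t ∧ X' t ≠ 0) →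
      f (X t₂) < f (X t₁)) := by
  have hfX : ∀ t, 0 ≤ t → HasDerivAt (fun u => f (X u)) (inner ℝ (f' (X t)) (X' t)) t := by
    intro t ht
    have h2 := (hf' (X t)).hasFDerivAt.comp_hasDerivAt t (hX t ht)
    simp only [InnerProductSpace.toDual_apply_apply] at h2
    exact h2
  have key : ∀ t, 0 ≤ t →
      deriv (fun u => f (X u)) t ≤
        -(1 / (2 * c₂ t)) * deriv (fun u => ‖X' u‖ ^ 2) t -
          (c₁ t / c₂ t) * ‖X' t‖ ^ 2 := by
    intro t ht
    rw [(hfX t ht).deriv, (hX' t ht).norm_sq.deriv]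
    have hm := grad_mono_aux f f' hf' hfconv (X t) (X' t) (b t) (hbpos t ht)
    have ho := congrArg (fun z => inner ℝ z (X' t)) (hODE t ht)
    simp only [inner_add_left, real_inner_smul_left, inner_zero_left,
      real_inner_self_eq_norm_sq] at ho
    rw [real_inner_comm] at ho
    have hc := hc₂pos t ht
    refine hm.trans (le_of_eq ?_)
    field_simp
    linarith
  refine ⟨key, ?_⟩
  intro t₁ t₂ h0 h12 h
  have := strictAntiOn_of_deriv_neg (convex_Icc t₁ t₂) (f := fun u => f (X u))
    (fun t ht => (hfX t (h0.trans ht.1)).continuousAt.continuousWithinAt) (by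
      intro t ht
      have ht' := interior_subset ht
      have ht0 := h0.trans ht'.1
      obtain ⟨hd, hne⟩ := h t ht'
      have hc := hc₂pos t ht0
      have hc1 := hc₁pos t ht0
      have hk := key t ht0
      have a1 : 0 ≤ 1 / (2 * c₂ t) * deriv (fun u => ‖X' u‖ ^ 2) t := by positivity
      have a2 : 0 < c₁ t / c₂ t * ‖X' t‖ ^ 2 := by
        have := norm_pos_iff.mpr hne
        positivity
      linarith)
  exact this (left_mem_Icc.mpr h12.le) (right_mem_Icc.mpr h12.le) h12
end

section
/- Let f : ℝⁿ → ℝ be a differentiable function, let g : ℝⁿ → ℝ be a differentiable convex function, and let c : [0,∞) → ℝ satisfy c(t) > 0 for all t. Suppose Z : [0,∞) → ℝⁿ is differentiable and the curve t ↦ ∇g(Z(t)) is differentiable with derivative (d/dt)∇g(Z(t)) = −c(t)·∇f(Z(t)) for every t ≥ 0. Then the function t ↦ f(Z(t)) is monotonically non-increasing on [0,∞). -/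
open Set RealInnerProductSpace

theorem grad_mono_aux_s13 {n : ℕ} (g : EuclideanSpace ℝ (Fin n) → ℝ)
    (g' : EuclideanSpace ℝ (Fin n) → EuclideanSpace ℝ (Fin n))
    (hg' : ∀ x, HasGradientAt g (g' x) x) (hgconv : ConvexOn ℝ univ g)
    (x y : EuclideanSpace ℝ (Fin n)) : 0 ≤ inner ℝ (g' y - g' x) (y - x) := by
  have hc : ConvexOn ℝ univ (g ∘ AffineMap.lineMap (k := ℝ) x y) := by
    simpa using hgconv.comp_affineMap (AffineMap.lineMap (k := ℝ) x y)
  have hd : ∀ s : ℝ, HasDerivAt (g ∘ AffineMap.lineMap (k := ℝ) x y)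
      (inner ℝ (g' (AffineMap.lineMap (k := ℝ) x y s)) (y - x)) s := by
    intro s
    have h1 := (hg' (AffineMap.lineMap (k := ℝ) x y s)).hasFDerivAt
    have h2 := h1.comp_hasDerivAt s (AffineMap.hasDerivAt_lineMap (a := x) (b := y))
    simpa using h2
  have h0 := hc.le_slope_of_hasDerivAt (mem_univ (0:ℝ)) (mem_univ (1:ℝ)) zero_lt_one (hd 0)
  have h1 := hc.slope_le_of_hasDerivAt (mem_univ (0:ℝ)) (mem_univ (1:ℝ)) zero_lt_one (hd 1)
  have := h0.trans h1
  simp only [AffineMap.lineMap_apply_zero, AffineMap.lineMap_apply_one] at this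
  rw [inner_sub_left]
  linarith

/-- Descent property of the quasi-gradient flow `(d/dt)∇g(Z) = −c(t)∇f(Z)`:
the objective value `f(Z(t))` is monotonically non-increasing. -/
theorem qgf_descent {n : ℕ}
    (f g : EuclideanSpace ℝ (Fin n) → ℝ)
    (f' g' : EuclideanSpace ℝ (Fin n) → EuclideanSpace ℝ (Fin n))
    (hf' : ∀ x, HasGradientAt f (f' x) x)
    (hg' : ∀ x, HasGradientAt g (g' x) x)
    (hgconv : ConvexOn ℝ univ g)
    (c : ℝ → ℝ)
    (hcpos : ∀ t, 0 ≤ t → 0 < c t)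
    (Z Z' : ℝ → EuclideanSpace ℝ (Fin n))
    (hZ : ∀ t, 0 ≤ t → HasDerivAt Z (Z' t) t)
    (hODE : ∀ t, 0 ≤ t →
      HasDerivAt (fun u => g' (Z u)) (-(c t) • f' (Z t)) t) :
    AntitoneOn (fun t => f (Z t)) (Ici 0) := by
  have key : ∀ t, 0 ≤ t → inner ℝ (f' (Z t)) (Z' t) ≤ 0 := by
    intro t ht
    have h1 := (hODE t ht).tendsto_slope
    have h2 := (hZ t ht).tendsto_slope
    have h3 : 0 ≤ inner ℝ (-(c t) • f' (Z t)) (Z' t) := by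
      refine ge_of_tendsto' (h1.inner h2) fun u => ?_
      have h := grad_mono_aux_s13 g g' hg' hgconv (Z t) (Z u)
      simp only [slope, vsub_eq_sub, real_inner_smul_left, real_inner_smul_right]
      rw [← mul_assoc]
      exact mul_nonneg (mul_self_nonneg _) h
    rw [real_inner_smul_left] at h3
    have := hcpos t ht
    by_contra hn
    push Not at hn
    nlinarith [mul_pos this hn]
  have hd : ∀ t, 0 ≤ t → HasDerivAt (fun t => f (Z t)) (inner ℝ (f' (Z t)) (Z' t)) t := by
    intro t ht
    have h := (hf' (Z t)).hasFDerivAt.comp_hasDerivAt t (hZ t ht)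
    simp only [InnerProductSpace.toDual_apply_apply] at h
    exact h
  refine antitoneOn_of_deriv_nonpos (convex_Ici 0)
    (fun t ht => (hd t ht).continuousAt.continuousWithinAt) ?_ ?_
  · intro t ht
    exact (hd t (interior_subset ht)).differentiableAt.differentiableWithinAt
  · intro t ht
    rw [(hd t (interior_subset ht)).deriv]
    exact key t (interior_subset ht)
end

section
/- Let 0 < μ < L and let (A_k)_{k ≥ 0} be a non-decreasing sequence of positive real numbers such that (A_{k+1} − A_k)² / (μ·A_{k+1}²) ≤ 1/L for all k ≥ 0. Then for every k ≥ 0, A_k ≤ A₀·(1 − √(μ/L))^{−k}. -/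
/-- The step-size condition `s_k = (A_{k+1} − A_k)²/(μ A_{k+1}²) ≤ 1/L` forces
geometric growth at most `A_k ≤ A₀ (1 − √(μ/L))^{−k}`. -/
theorem geometric_growth_bound (μ L : ℝ) (hμ : 0 < μ) (hμL : μ < L)
    (A : ℕ → ℝ)
    (hApos : ∀ k, 0 < A k)
    (hAmono : Monotone A)
    (hstep : ∀ k, (A (k + 1) - A k) ^ 2 / (μ * A (k + 1) ^ 2) ≤ 1 / L) :
    ∀ k, A k ≤ A 0 * (1 - Real.sqrt (μ / L))⁻¹ ^ k := by
  have hL : 0 < L := hμ.trans hμL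
  have hq : Real.sqrt (μ / L) < 1 := by
    rw [Real.sqrt_lt' one_pos, one_pow, div_lt_one hL]
    exact hμL
  have hpos : 0 < 1 - Real.sqrt (μ / L) := by linarith
  intro k
  induction k with
  | zero => simp
  | succ k ih =>
    have hA := hApos (k + 1)
    have h1 : ((A (k + 1) - A k) / A (k + 1)) ^ 2 ≤ μ / L := by
      have h := mul_le_mul_of_nonneg_left (hstep k) hμ.le
      have e : μ * ((A (k + 1) - A k) ^ 2 / (μ * A (k + 1) ^ 2))
          = ((A (k + 1) - A k) / A (k + 1)) ^ 2 := by
        field_simp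
      rw [e, mul_one_div] at h
      exact h
    have h2 := Real.le_sqrt_of_sq_le h1
    rw [div_le_iff₀ hA] at h2
    have h3 : A (k + 1) ≤ A k * (1 - Real.sqrt (μ / L))⁻¹ := by
      rw [← div_eq_mul_inv, le_div_iff₀ hpos]
      linarith
    calc A (k + 1) ≤ A k * (1 - Real.sqrt (μ / L))⁻¹ := h3
      _ ≤ (A 0 * (1 - Real.sqrt (μ / L))⁻¹ ^ k) * (1 - Real.sqrt (μ / L))⁻¹ :=
        mul_le_mul_of_nonneg_right ih (inv_pos.mpr hpos).le
      _ = A 0 * (1 - Real.sqrt (μ / L))⁻¹ ^ (k + 1) := by rw [pow_succ, mul_assoc]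
end
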